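/- arXiv:2508.02465 — 2 statements merged into one kernel-verified Lean document; each statement's English description precedes it below -/
import Mathlib

section
/- Let C be a type and let f, g : Fin 4 → C be injective functions such that f k ≠ g k for every k : Fin 4. Then there exist distinct indices j, k : Fin 4 such that the four values f j, g j, f k, g k are pairwise distinct. -/
/-- Combinatorial core of the rainbow-rectangle extraction: if `f, g : Fin 4 → C`
are injective and `f k ≠ g k` for each `k`, then some two indices `j ≠ k` give
four pairwise distinct values `f j, g j, f k, g k`. -/
theorem rainbow_pair_extraction {C : Type*} (f g : Fin 4 → C)
    (hf : Function.Injective f) (hg : Function.Injective g)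
    (hfg : ∀ k : Fin 4, f k ≠ g k) :
    ∃ j k : Fin 4, j ≠ k ∧
      f j ≠ g j ∧ f j ≠ f k ∧ f j ≠ g k ∧
      g j ≠ f k ∧ g j ≠ g k ∧ f k ≠ g k := by
  -- `f 0 = g k` and `g 0 = f k` each exclude at most one of the three indices `k ≠ 0`.
  obtain ⟨k, hk, hfk, hgk⟩ : ∃ k : Fin 4, 0 ≠ k ∧ f 0 ≠ g k ∧ g 0 ≠ f k := by
    by_contra! h
    have h₁ := or_iff_not_imp_left.mpr (h 1 (by decide))
    have h₂ := or_iff_not_imp_left.mpr (h 2 (by decide))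
    have h₃ := or_iff_not_imp_left.mpr (h 3 (by decide))
    have f₁₂ : f 1 ≠ f 2 := hf.ne (by decide)
    have f₁₃ : f 1 ≠ f 3 := hf.ne (by decide)
    have f₂₃ : f 2 ≠ f 3 := hf.ne (by decide)
    have g₁₂ : g 1 ≠ g 2 := hg.ne (by decide)
    have g₁₃ : g 1 ≠ g 3 := hg.ne (by decide)
    have g₂₃ : g 2 ≠ g 3 := hg.ne (by decide)
    clear h hf hg hfg
    grind
  exact ⟨0, k, hk, hfg 0, hf.ne hk, hfk, hgk, hg.ne hk, hfg k⟩
end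

section
/- Let E and F be real inner product spaces, let x > 0 be real, let u : Fin n → E satisfy dist (u k) (u l) = x for all k ≠ l, and let v : Fin m → F be injective such that there is exactly one unordered pair {i, j} of distinct indices with dist (v i) (v j) = x. Consider the points P (k, i) = (u k, v i) in the L² product space WithLp 2 (E × F). Then the number of unordered pairs of distinct index pairs {(k,i), (l,j)} with dist (P (k,i)) (P (l,j)) = x equals m · C(n, 2) + n. -/
/-- Two points of the product configuration are at distance `x` iff they differ in exactly one
coordinate, and the parts in that coordinate are at distance `x`. -/
lemma dist_product_configuration_eq_iff {ι κ E F : Type*}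
    [NormedAddCommGroup E] [NormedAddCommGroup F] {x : ℝ} (hx : 0 < x)
    {u : ι → E} (hu : ∀ k l : ι, k ≠ l → dist (u k) (u l) = x)
    {v : κ → F} (hv : Function.Injective v) (p q : ι × κ) :
    dist ((WithLp.equiv 2 (E × F)).symm (u p.1, v p.2))
        ((WithLp.equiv 2 (E × F)).symm (u q.1, v q.2)) = x ↔
      (p.1 ≠ q.1 ∧ p.2 = q.2) ∨ (p.1 = q.1 ∧ dist (v p.2) (v q.2) = x) := by
  have hd : dist ((WithLp.equiv 2 (E × F)).symm (u p.1, v p.2))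
      ((WithLp.equiv 2 (E × F)).symm (u q.1, v q.2)) =
        √(dist (u p.1) (u q.1) ^ 2 + dist (v p.2) (v q.2) ^ 2) :=
    WithLp.prod_dist_eq_of_L2 _ _
  rw [hd, Real.sqrt_eq_iff_eq_sq (by positivity) hx.le]
  by_cases h : p.1 = q.1
  · simp only [h, dist_self, ne_eq, not_true_eq_false, false_and, true_and, false_or]
    rw [zero_pow two_ne_zero, zero_add, sq_eq_sq₀ dist_nonneg hx.le]
  · simp [h, hu _ _ h, hv.eq_iff]

/-- The product sets `t × {i}`, for `t` a pair and `i` arbitrary, number `m * C(n, 2)`. -/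
lemma card_image_pair_product_singleton (n m : ℕ) :
    ((Finset.univ (α := Fin m) ×ˢ Finset.powersetCard 2 (Finset.univ (α := Fin n))).image
      fun a => a.2 ×ˢ ({a.1} : Finset (Fin m))).card = m * n.choose 2 := by
  rw [Finset.card_image_of_injOn, Finset.card_product, Finset.card_powersetCard]
  · simp
  · rintro ⟨i, s⟩ hs ⟨j, t⟩ ht h
    simp only [Finset.coe_product, Set.mem_prod, Finset.mem_coe, Finset.mem_powersetCard] at hs ht h
    have hs0 : s.Nonempty := Finset.card_pos.mp (by omega)
    have ht0 : t.Nonempty := Finset.card_pos.mp (by omega)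
    have h1 := congrArg (Finset.image Prod.fst) h
    have h2 := congrArg (Finset.image Prod.snd) h
    rw [Finset.product_image_fst (by simp), Finset.product_image_fst (by simp)] at h1
    rw [Finset.product_image_snd hs0, Finset.product_image_snd ht0, Finset.singleton_inj] at h2
    rw [h1, h2]

/-- Counting segments of length `x` in the product configuration: if `u` is a
regular simplex `S_n(x)` in `E` and `v` is an injective family in `F` with
exactly one unordered pair of distinct indices at distance `x`, then the number
of unordered pairs of product points at L²-distance `x` is `m·C(n,2) + n`. -/
theorem card_segments_in_product_configuration {E F : Type*}
    [NormedAddCommGroup E] [InnerProductSpace ℝ E]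
    [NormedAddCommGroup F] [InnerProductSpace ℝ F]
    {n m : ℕ} (x : ℝ) (hx : 0 < x)
    (u : Fin n → E) (hu : ∀ k l : Fin n, k ≠ l → dist (u k) (u l) = x)
    (v : Fin m → F) (hv : Function.Injective v)
    (hv1 : ∃! s : Finset (Fin m),
      ∃ i j : Fin m, i ≠ j ∧ s = {i, j} ∧ dist (v i) (v j) = x) :
    {s : Finset (Fin n × Fin m) | ∃ p q : Fin n × Fin m, p ≠ q ∧ s = {p, q} ∧
        dist ((WithLp.equiv 2 (E × F)).symm (u p.1, v p.2))
          ((WithLp.equiv 2 (E × F)).symm (u q.1, v q.2)) = x}.ncard =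
      m * Nat.choose n 2 + n := by
  obtain ⟨_, ⟨i, j, hij, rfl, hd⟩, huniq⟩ := hv1
  set A := (Finset.univ (α := Fin m) ×ˢ Finset.powersetCard 2 (Finset.univ (α := Fin n))).image
    fun a => a.2 ×ˢ ({a.1} : Finset (Fin m)) with hA
  set B := (Finset.univ (α := Fin n)).image
    fun k => ({k} : Finset (Fin n)) ×ˢ ({i, j} : Finset (Fin m)) with hB
  have hBcard : B.card = n := by
    rw [hB, Finset.card_image_of_injective, Finset.card_univ, Fintype.card_fin]
    intro k l h
    have h1 := congrArg (Finset.image Prod.fst) h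
    simpa [Finset.product_image_fst] using h1
  have hAB : Disjoint A B := by
    rw [Finset.disjoint_left]
    intro s hsA hsB
    simp only [hA, hB, Finset.mem_image] at hsA hsB
    obtain ⟨a, -, rfl⟩ := hsA
    obtain ⟨k, -, h⟩ := hsB
    have hi : (k, i) ∈ a.2 ×ˢ ({a.1} : Finset (Fin m)) := by simp [← h]
    have hj : (k, j) ∈ a.2 ×ˢ ({a.1} : Finset (Fin m)) := by simp [← h]
    simp only [Finset.mem_product, Finset.mem_singleton] at hi hj
    exact hij (hi.2.trans hj.2.symm)
  have hcard : (A ∪ B).card = m * n.choose 2 + n := by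
    rw [Finset.card_union_of_disjoint hAB, hBcard, hA, card_image_pair_product_singleton]
  rw [← hcard, ← Set.ncard_coe_finset]
  congr 1
  ext s
  simp only [dist_product_configuration_eq_iff hx hu hv, Set.mem_ofPred_eq, Finset.coe_union,
    Set.mem_union, Finset.mem_coe, hA, hB, Finset.mem_image, Finset.mem_product, Finset.mem_univ,
    true_and, Finset.mem_powersetCard, Finset.subset_univ, Prod.exists]
  constructor
  · rintro ⟨k, a, l, b, hne, rfl, ⟨hkl, hab⟩ | ⟨hkl, hab⟩⟩
    · obtain rfl : a = b := hab
      exact Or.inl ⟨a, {k, l}, Finset.card_pair hkl, by ext ⟨c, d⟩; simp⟩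
    · obtain rfl : k = l := hkl
      have hs := huniq {a, b} ⟨a, b, fun h => hne (by rw [h]), rfl, hab⟩
      exact Or.inr ⟨k, by rw [← hs]; ext ⟨c, d⟩; simp⟩
  · rintro (⟨a, t, ht, rfl⟩ | ⟨k, rfl⟩)
    · obtain ⟨k, l, hkl, rfl⟩ := Finset.card_eq_two.mp ht
      exact ⟨k, a, l, a, by simp [hkl], by ext ⟨c, d⟩; simp, Or.inl ⟨hkl, rfl⟩⟩
    · exact ⟨k, i, k, j, by simp [hij], by ext ⟨c, d⟩; simp, Or.inr ⟨rfl, hd⟩⟩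
end
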